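/- arXiv:2302.03472 — 2 statements merged into one kernel-verified Lean document; each statement's English description precedes it below -/
import Mathlib

section
/- For any ranked list of N₊ positive and N₋ negative items with N₊ > K and N₋ > K, the quantity (N₊+K)² − 4·N₊·N₋·OPAUC(β) is nonnegative, and Precision@K ≥ (1/K)·⌊(N₊ + K − √((N₊+K)² − 4·N₊·N₋·OPAUC(β)))/2⌋, where β = K/N₋, ⌊·⌋ is the integer floor, and √ is the real square root. -/
/-!
Let `t` be the number of positives in the top `K` ranks. The top-`K` negatives split into those
ranked in the top `K`, each preceded by at most `t` positives, and the remaining ones, each preceded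
by at most `Np` positives. Every negative in the top `K` ranks is a top-`K` negative, so there are
at least `K - t` of the first kind, hence at most `t` of the second. This gives
`C ≤ t * (Np + K - t)` (`pairCount_add_sq_le`), that is, `t` lies between the two roots of
`x² - (Np + K) x + C`. So the discriminant is at least `(Np + K - 2 t)²`, and `t` is at least the
smaller root, hence at least its floor.
-/

/-- The set of top-`K` negatives in a ranked list of `N` items (`pos i = true`
means position `i` holds a positive item; smaller index means better rank):
the negative positions that have fewer than `K` negatives strictly before them. -/
def topKNeg (N K : ℕ) (pos : Fin N → Bool) : Finset (Fin N) :=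
  Finset.univ.filter fun j => pos j = false ∧
    (Finset.univ.filter fun j' => pos j' = false ∧ j' < j).card < K

/-- The pair count `C`: the number of pairs `(i, j)` with `i` positive, `j` a
top-`K` negative, and `i` ranked before `j`. -/
def pairCount (N K : ℕ) (pos : Fin N → Bool) : ℕ :=
  (Finset.univ.filter fun p : Fin N × Fin N =>
    pos p.1 = true ∧ p.2 ∈ topKNeg N K pos ∧ p.1 < p.2).card

/-- The number `t` of positive items among the top `K` ranks. -/
def topKPos (N K : ℕ) (pos : Fin N → Bool) : ℕ :=
  (Finset.univ.filter fun i : Fin N => pos i = true ∧ (i : ℕ) < K).card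

/-- Sending a top-`K` negative to the number of negatives before it is an injection into
`{0, …, K - 1}`. -/
lemma card_topKNeg_le (N K : ℕ) (pos : Fin N → Bool) : (topKNeg N K pos).card ≤ K := by
  have hlt : ∀ a b : Fin N, pos a = false → a < b →
      (Finset.univ.filter fun j' => pos j' = false ∧ j' < a).card <
        (Finset.univ.filter fun j' => pos j' = false ∧ j' < b).card := by
    intro a b ha hab
    apply Finset.card_lt_card
    rw [Finset.ssubset_iff_of_subset]
    · exact ⟨a, by simp [ha, hab], by simp⟩
    · intro x hx
      simp only [Finset.mem_filter, Finset.mem_univ, true_and] at hx ⊢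
      exact ⟨hx.1, hx.2.trans hab⟩
  have h := Finset.card_le_card_of_injOn (s := topKNeg N K pos) (t := Finset.range K)
    (fun j => (Finset.univ.filter fun j' => pos j' = false ∧ j' < j).card) ?_ ?_
  · simpa using h
  · intro j hj
    simp only [topKNeg, Finset.coe_filter, Finset.mem_univ, true_and, Set.mem_ofPred_eq] at hj
    simpa using hj.2
  · intro a ha b hb hab
    simp only [topKNeg, Finset.coe_filter, Finset.mem_univ, true_and, Set.mem_ofPred_eq] at ha hb
    rcases lt_trichotomy a b with h | h | h
    · exact absurd hab (hlt a b ha.1 h).ne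
    · exact h
    · exact absurd hab.symm (hlt b a hb.1 h).ne

/-- Fewer than `K` items precede a position in the top `K` ranks, so a negative there is a top-`K`
negative. -/
lemma mem_topKNeg_of_lt {N K : ℕ} {pos : Fin N → Bool} {j : Fin N} (hj : pos j = false)
    (hK : (j : ℕ) < K) : j ∈ topKNeg N K pos := by
  simp only [topKNeg, Finset.mem_filter, Finset.mem_univ, true_and]
  refine ⟨hj, lt_of_le_of_lt (Finset.card_le_card (t := Finset.Iio j) ?_) ?_⟩
  · intro x hx
    simp only [Finset.mem_filter, Finset.mem_univ, true_and] at hx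
    simpa using hx.2
  · simpa using hK

/-- Subtraction-free form of `C ≤ t * (P + K - t)`, where `P` is the number of positives. -/
lemma pairCount_add_sq_le (N K P : ℕ) (hN : K ≤ N) (pos : Fin N → Bool)
    (hpos : (Finset.univ.filter fun i => pos i = true).card = P) :
    pairCount N K pos + topKPos N K pos ^ 2 ≤ topKPos N K pos * (P + K) := by
  set A := (topKNeg N K pos).filter fun j : Fin N => (j : ℕ) < K with hA
  set B := (topKNeg N K pos).filter fun j : Fin N => ¬ (j : ℕ) < K with hB
  set T := Finset.univ.filter fun i : Fin N => pos i = true ∧ (i : ℕ) < K with hT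
  set Q := Finset.univ.filter fun i : Fin N => pos i = true with hQ
  have hAB : A.card + B.card ≤ K :=
    (Finset.card_filter_add_card_filter_not _).trans_le (card_topKNeg_le N K pos)
  have htP : T.card ≤ P := by
    rw [← hpos]
    apply Finset.card_le_card
    intro x hx
    simp only [hT, hQ, Finset.mem_filter, Finset.mem_univ, true_and] at hx ⊢
    exact hx.1
  have hAK : K ≤ A.card + T.card := by
    have h1 : (Finset.univ.filter fun i : Fin N => (i : ℕ) < K).card = K := by
      rw [Fin.card_filter_val_lt, min_eq_right hN]
    calc K = _ := h1.symm
      _ ≤ (A ∪ T).card := by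
        apply Finset.card_le_card
        intro x hx
        simp only [hA, hT, Finset.mem_union, Finset.mem_filter, Finset.mem_univ, true_and] at hx ⊢
        cases h : pos x
        · exact Or.inl ⟨mem_topKNeg_of_lt h hx, hx⟩
        · exact Or.inr ⟨rfl, hx⟩
      _ ≤ _ := Finset.card_union_le _ _
  have hC : pairCount N K pos ≤ T.card * A.card + P * B.card := by
    rw [← hpos, ← Finset.card_product, ← Finset.card_product]
    refine le_trans (Finset.card_le_card (t := T ×ˢ A ∪ Q ×ˢ B) ?_) (Finset.card_union_le _ _)
    rintro ⟨i, j⟩ h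
    simp only [hA, hB, hT, hQ, Finset.mem_union, Finset.mem_product, Finset.mem_filter,
      Finset.mem_univ, true_and] at h ⊢
    by_cases hj : (j : ℕ) < K
    · exact Or.inl ⟨⟨h.1, lt_trans h.2.2 hj⟩, h.2.1, hj⟩
    · exact Or.inr ⟨h.1, h.2.1, hj⟩
  have ht : topKPos N K pos = T.card := rfl
  rw [ht]
  -- With `A.card ≤ K - B.card`, the bound `hC` is increasing in `B.card`, which is at most `t`.
  have hBt : B.card ≤ T.card := by omega
  zify at *
  nlinarith [mul_nonneg (sub_nonneg.2 htP) (sub_nonneg.2 hBt),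
    mul_nonneg (Int.natCast_nonneg T.card) (sub_nonneg.2 hAB)]

/-- For any ranked list with `N₊ > K` positives and `N₋ > K` negatives, the
discriminant `(N₊+K)² − 4·N₊·N₋·OPAUC(K/N₋)` is nonnegative, and
`Precision@K ≥ (1/K)·⌊(N₊+K − √((N₊+K)² − 4·N₊·N₋·OPAUC(K/N₋)))/2⌋`,
where `OPAUC(K/N₋) = C/(N₊·N₋)` and `Precision@K = t/K`. -/
theorem stmt2 (Np Nm K : ℕ) (hKp : K < Np) (hKm : K < Nm)
    (pos : Fin (Np + Nm) → Bool)
    (hpos : (Finset.univ.filter fun i => pos i = true).card = Np) :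
    0 ≤ ((Np : ℝ) + K) ^ 2 -
        4 * Np * Nm * ((pairCount (Np + Nm) K pos : ℝ) / (Np * Nm)) ∧
    (1 / (K : ℝ)) *
        (⌊((Np : ℝ) + K - Real.sqrt (((Np : ℝ) + K) ^ 2 -
            4 * Np * Nm * ((pairCount (Np + Nm) K pos : ℝ) / (Np * Nm)))) / 2⌋ : ℝ)
      ≤ (topKPos (Np + Nm) K pos : ℝ) / K := by
  have hNp : (Np : ℝ) ≠ 0 := by
    have : Np ≠ 0 := by omega
    exact_mod_cast this
  have hNm : (Nm : ℝ) ≠ 0 := by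
    have : Nm ≠ 0 := by omega
    exact_mod_cast this
  have hmain := pairCount_add_sq_le (Np + Nm) K Np (by omega) pos hpos
  have hC : 4 * (Np : ℝ) * Nm * ((pairCount (Np + Nm) K pos : ℝ) / (Np * Nm)) =
      4 * (pairCount (Np + Nm) K pos : ℝ) := by
    field_simp
  rw [hC]
  generalize pairCount (Np + Nm) K pos = C at *
  generalize topKPos (Np + Nm) K pos = t at *
  have hm : (C : ℝ) + (t : ℝ) ^ 2 ≤ t * (Np + K) := by exact_mod_cast hmain
  have hsq : ((Np : ℝ) + K - 2 * t) ^ 2 ≤ ((Np : ℝ) + K) ^ 2 - 4 * C := by nlinarith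
  refine ⟨(sq_nonneg _).trans hsq, ?_⟩
  have hs := Real.le_sqrt_of_sq_le hsq
  rw [one_div, inv_mul_eq_div]
  gcongr
  refine (Int.floor_le _).trans ?_
  linarith
end

section
/- For any ranked list of N₊ positive and N₋ negative items with N₊ > K and N₋ > K, Precision@K ≤ (1/K)·⌈√(N₊·N₋·OPAUC(β))⌉, where β = K/N₋, ⌈·⌉ is the integer ceiling, and √ is the real square root. -/
/-- Counting the negatives before a position numbers the negatives by `0, 1, 2, …` without
repetition, so each number below `K` is attained at a top-`K` negative. -/
lemma le_card_topKNeg (N K : ℕ) (pos : Fin N → Bool)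
    (h : K ≤ (Finset.univ.filter fun i => pos i = false).card) :
    K ≤ (topKNeg N K pos).card := by
  set S : Finset (Fin N) := Finset.univ.filter fun i => pos i = false with hS
  let r : Fin N → ℕ := fun j => (Finset.univ.filter fun j' => pos j' = false ∧ j' < j).card
  have hlt : ∀ a b : Fin N, pos a = false → a < b → r a < r b := by
    intro a b ha hab
    apply Finset.card_lt_card
    rw [Finset.ssubset_iff_of_subset]
    · exact ⟨a, by simp [ha, hab], by simp⟩
    · intro x hx
      simp only [Finset.mem_filter, Finset.mem_univ, true_and] at hx ⊢
      exact ⟨hx.1, hx.2.trans hab⟩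
  have hinj : Set.InjOn r S := by
    intro a ha b hb hab
    have ha' : pos a = false := by simpa [hS] using ha
    have hb' : pos b = false := by simpa [hS] using hb
    rcases lt_trichotomy a b with h1 | h1 | h1
    · exact absurd hab (hlt a b ha' h1).ne
    · exact h1
    · exact absurd hab (hlt b a hb' h1).ne'
  have himg : S.image r = Finset.range S.card := by
    apply Finset.eq_of_subset_of_card_le
    · intro n hn
      obtain ⟨a, ha, rfl⟩ := Finset.mem_image.1 hn
      rw [Finset.mem_range]
      apply Finset.card_lt_card
      rw [Finset.ssubset_iff_of_subset]
      · exact ⟨a, ha, by simp⟩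
      · intro x hx
        simp only [hS, Finset.mem_filter, Finset.mem_univ, true_and] at hx ⊢
        exact hx.1
    · rw [Finset.card_image_of_injOn hinj, Finset.card_range]
  have hsub : Finset.range K ⊆ (topKNeg N K pos).image r := by
    intro n hn
    have hn' := Finset.mem_range.1 hn
    have : n ∈ S.image r := by
      rw [himg]
      exact Finset.mem_range.2 (hn'.trans_le h)
    obtain ⟨a, ha, rfl⟩ := Finset.mem_image.1 this
    refine Finset.mem_image.2 ⟨a, ?_, rfl⟩
    simp only [topKNeg, Finset.mem_filter, Finset.mem_univ, true_and]
    exact ⟨by simpa [hS] using ha, hn'⟩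
  simpa using (Finset.card_le_card hsub).trans Finset.card_image_le

/-- The top `K` ranks hold at most `K` items, so every positive among them pushes a top-`K`
negative to a later rank. -/
lemma topKPos_le_card_late (N K : ℕ) (pos : Fin N → Bool)
    (h : K ≤ (Finset.univ.filter fun i => pos i = false).card) :
    topKPos N K pos ≤ ((topKNeg N K pos).filter fun j : Fin N => ¬ (j : ℕ) < K).card := by
  have h1 := le_card_topKNeg N K pos h
  have h2 := Finset.card_filter_add_card_filter_not (s := topKNeg N K pos) (fun j : Fin N => (j : ℕ) < K)
  have h3 : ((topKNeg N K pos).filter fun j : Fin N => (j : ℕ) < K).card + topKPos N K pos ≤ K := by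
    rw [topKPos, ← Finset.card_union_of_disjoint]
    · rw [← Finset.card_image_of_injective _ Fin.val_injective]
      refine (Finset.card_le_card (t := Finset.range K) ?_).trans (Finset.card_range K).le
      intro n hn
      simp only [Finset.mem_image, Finset.mem_union, Finset.mem_filter] at hn
      obtain ⟨a, ha | ha, rfl⟩ := hn
      · exact Finset.mem_range.2 ha.2
      · exact Finset.mem_range.2 ha.2.2
    · rw [Finset.disjoint_left]
      intro a ha hb
      simp only [topKNeg, Finset.mem_filter, Finset.mem_univ, true_and] at ha hb
      simp [ha.1.1] at hb
  omega

lemma topKPos_sq_le (N K : ℕ) (pos : Fin N → Bool)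
    (h : K ≤ (Finset.univ.filter fun i => pos i = false).card) :
    topKPos N K pos ^ 2 ≤ pairCount N K pos := by
  rw [sq]
  refine (Nat.mul_le_mul_left _ (topKPos_le_card_late N K pos h)).trans ?_
  rw [topKPos, ← Finset.card_product]
  apply Finset.card_le_card
  rintro ⟨i, j⟩ hij
  simp only [Finset.mem_product, Finset.mem_filter, Finset.mem_univ, true_and] at hij ⊢
  refine ⟨hij.1.1, hij.2.1, ?_⟩
  rw [Fin.lt_def]
  omega

/-- For any ranked list with `N₊ > K` positives and `N₋ > K` negatives,
`Precision@K ≤ (1/K)·⌈√(N₊·N₋·OPAUC(K/N₋))⌉`,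
where `OPAUC(K/N₋) = C/(N₊·N₋)` and `Precision@K = t/K`. -/
theorem stmt3 (Np Nm K : ℕ) (hKp : K < Np) (hKm : K < Nm)
    (pos : Fin (Np + Nm) → Bool)
    (hpos : (Finset.univ.filter fun i => pos i = true).card = Np) :
    (topKPos (Np + Nm) K pos : ℝ) / K ≤
      (1 / (K : ℝ)) *
        (⌈Real.sqrt ((Np : ℝ) * Nm *
            ((pairCount (Np + Nm) K pos : ℝ) / (Np * Nm)))⌉ : ℝ) := by
  have hneg : (Finset.univ.filter fun i => pos i = false).card = Nm := by
    have h := Finset.card_filter_add_card_filter_not (s := Finset.univ) (fun i => pos i = true)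
    simp only [Bool.not_eq_true, Finset.card_univ, Fintype.card_fin] at h
    omega
  have hsq := topKPos_sq_le (Np + Nm) K pos (by omega)
  have hNp : (Np : ℝ) ≠ 0 := by
    have : Np ≠ 0 := by omega
    exact_mod_cast this
  have hNm : (Nm : ℝ) ≠ 0 := by
    have : Nm ≠ 0 := by omega
    exact_mod_cast this
  rw [mul_div_cancel₀ _ (mul_ne_zero hNp hNm), div_eq_mul_one_div, mul_comm]
  refine mul_le_mul_of_nonneg_left ?_ (by positivity)
  refine le_trans ?_ (Int.le_ceil _)
  exact Real.le_sqrt_of_sq_le (by exact_mod_cast hsq)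
end
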